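/- Let A, B be 6×6 complex matrices with rank(A : B) = 6 and A C₆ A* = B C₆ B*, where C₆ = ((-1)^r δ_{r,7-s})_{r,s=1}^6. If rank A = 3 + r for some 0 ≤ r ≤ 3, then rank B = 3 + r. -/

import Mathlib

open Matrix

/-- The 6×6 symplectic matrix `C₆ = ((-1)^r δ_{r,7-s})_{r,s=1}^6`, 0-based indices. -/
def C6 : Matrix (Fin 6) (Fin 6) ℂ :=
  Matrix.of fun r s => (-1 : ℂ) ^ ((r : ℕ) + 1) * (if (r : ℕ) + (s : ℕ) = 5 then 1 else 0)

/-!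
Suppose `A J Aᴴ = B J' Bᴴ` with `J` invertible, and let `M = (A : B)`. If `Bᴴ x = 0`, then
`A J (Aᴴ x) = B J' (Bᴴ x) = 0`, so `Aᴴ` maps `ker Bᴴ` into `ker (A J)`; the kernel of this map is
`ker Aᴴ ∩ ker Bᴴ = ker Mᴴ`. Counting dimensions gives `rank A + rank M ≤ rank B + n`, where `n` is
the number of columns of `A`. When `rank M ≥ n` this yields `rank A ≤ rank B`, and the situation is
symmetric in `A` and `B`.
-/

open Module LinearMap

theorem finrank_map_add_finrank_ker_inf {K V W : Type*} [DivisionRing K]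
    [AddCommGroup V] [Module K V] [AddCommGroup W] [Module K W]
    (f : V →ₗ[K] W) (U : Submodule K V) [FiniteDimensional K U] :
    finrank K (U.map f) + finrank K (ker f ⊓ U : Submodule K V) = finrank K U := by
  rw [← finrank_range_add_finrank_ker (f.domRestrict U), range_domRestrict, ker_domRestrict,
    inf_comm, ← Submodule.map_comap_subtype, Submodule.finrank_map_subtype_eq]

theorem ker_mulVecLin_fromRows {R m n p : Type*} [CommSemiring R] [Fintype m]
    (C : Matrix n m R) (D : Matrix p m R) :
    ker (fromRows C D).mulVecLin = ker C.mulVecLin ⊓ ker D.mulVecLin := by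
  ext x
  simp [funext_iff, fromRows_mulVec]

section Field

variable {K l m n p : Type*} [Field K]

theorem rank_add_finrank_ker_mulVecLin [Fintype n] (A : Matrix l n K) :
    A.rank + finrank K (ker A.mulVecLin) = Fintype.card n := by
  rw [Matrix.rank, finrank_range_add_finrank_ker, finrank_fintype_fun_eq_card]

theorem rank_add_rank_fromRows_le_of_mul_eq_mul [Fintype m] [Fintype n] [Fintype p]
    {A : Matrix l n K} {B : Matrix l p K} {C : Matrix n m K} {D : Matrix p m K}
    (h : A * C = B * D) : A.rank + (fromRows C D).rank ≤ D.rank + Fintype.card n := by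
  have hmap : (ker D.mulVecLin).map C.mulVecLin ≤ ker A.mulVecLin := by
    rintro _ ⟨x, hx, rfl⟩
    have hDx : D *ᵥ x = 0 := hx
    rw [mem_ker, mulVecLin_apply, mulVecLin_apply, mulVec_mulVec, h, ← mulVec_mulVec, hDx,
      mulVec_zero]
  have hle := Submodule.finrank_mono hmap
  have hsplit := finrank_map_add_finrank_ker_inf C.mulVecLin (ker D.mulVecLin)
  rw [← ker_mulVecLin_fromRows] at hsplit
  have hA := rank_add_finrank_ker_mulVecLin A
  have hD := rank_add_finrank_ker_mulVecLin D
  have hCD := rank_add_finrank_ker_mulVecLin (fromRows C D)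
  lia

theorem exists_rank_factorization [Finite m] [Fintype n] (A : Matrix m n K) :
    ∃ (L : Matrix m (Fin A.rank) K) (R : Matrix (Fin A.rank) n K), A = L * R := by
  classical
  let b : Basis (Fin A.rank) K (range A.mulVecLin) := finBasis K (range A.mulVecLin)
  let c (j : n) : range A.mulVecLin := ⟨A.col j, Pi.single j 1, by simp⟩
  refine ⟨of fun i k => (b k : m → K) i, of fun k j => b.repr (c j) k, ?_⟩
  ext i j
  have hcol : ∑ k, b.repr (c j) k • (b k : m → K) = A.col j := by
    simpa only [Submodule.coe_sum, Submodule.coe_smul] using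
      congrArg Subtype.val (b.sum_repr (c j))
  calc A i j = (∑ k, b.repr (c j) k • (b k : m → K)) i := by rw [hcol, col_apply]
    _ = _ := by simp [mul_apply, mul_comm]

end Field

section StarRing

variable {K m n p : Type*} [Field K] [StarRing K]

theorem rank_conjTranspose_le [Fintype m] [Fintype n] (A : Matrix m n K) : Aᴴ.rank ≤ A.rank := by
  obtain ⟨L, R, hLR⟩ := exists_rank_factorization A
  calc Aᴴ.rank = (Rᴴ * Lᴴ).rank := by rw [← conjTranspose_mul, ← hLR]
    _ ≤ Rᴴ.rank := rank_mul_le_left _ _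
    _ ≤ A.rank := by simpa only [Fintype.card_fin] using rank_le_card_width Rᴴ

-- `Matrix.rank_conjTranspose` asks for a star-ordered field, which excludes finite fields.
theorem rank_conjTranspose_eq [Fintype m] [Fintype n] (A : Matrix m n K) : Aᴴ.rank = A.rank := by
  refine (rank_conjTranspose_le A).antisymm ?_
  simpa only [conjTranspose_conjTranspose] using rank_conjTranspose_le Aᴴ

theorem rank_add_rank_fromCols_le [Finite m] [Fintype n] [Fintype p] [DecidableEq n]
    {A : Matrix m n K} {B : Matrix m p K} {J : Matrix n n K} {J' : Matrix p p K}
    (hJ : IsUnit J.det) (h : A * J * Aᴴ = B * J' * Bᴴ) :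
    A.rank + (fromCols A B).rank ≤ B.rank + Fintype.card n := by
  have := Fintype.ofFinite m
  have hle := rank_add_rank_fromRows_le_of_mul_eq_mul h
  rwa [rank_mul_eq_left_of_isUnit_det J A hJ, ← conjTranspose_fromCols_eq_fromRows_conjTranspose,
    rank_conjTranspose_eq, rank_conjTranspose_eq] at hle

end StarRing

theorem rank_fromCols_comm {R m n p : Type*} [CommSemiring R] [Fintype n] [Fintype p]
    (A : Matrix m n R) (B : Matrix m p R) : (fromCols A B).rank = (fromCols B A).rank := by
  rw [← rank_submatrix (fromCols B A) (Equiv.refl m) (Equiv.sumComm n p)]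
  congr 1
  ext i (j | j) <;> rfl

theorem rank_A_eq_rank_B_general {K m n : Type*} [Field K] [StarRing K] [Finite m] [Fintype n]
    [DecidableEq n] {A B : Matrix m n K} {J J' : Matrix n n K} (hJ : IsUnit J.det)
    (hJ' : IsUnit J'.det) (hrank : Fintype.card n ≤ (fromCols A B).rank)
    (h : A * J * Aᴴ = B * J' * Bᴴ) : A.rank = B.rank := by
  have hAB := rank_add_rank_fromCols_le hJ h
  have hBA := rank_add_rank_fromCols_le hJ' h.symm
  rw [rank_fromCols_comm] at hBA
  lia

theorem C6_apply (i j : Fin 6) : C6 i j = if j = i.rev then (-1) ^ ((i : ℕ) + 1) else 0 := by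
  have hrev : (i : ℕ) + (j : ℕ) = 5 ↔ j = i.rev := by
    rw [Fin.ext_iff, Fin.val_rev]
    lia
  simp only [C6, of_apply, hrev, mul_ite, mul_one, mul_zero]

theorem C6_mul_self : C6 * C6 = -1 := by
  ext i j
  have hsign : (-1 : ℂ) ^ ((i : ℕ) + 1) * (-1) ^ ((i.rev : ℕ) + 1) = -1 := by
    have hexp : (i : ℕ) + 1 + ((i.rev : ℕ) + 1) = 7 := by
      rw [Fin.val_rev]
      lia
    rw [← pow_add, hexp]
    norm_num
  calc (C6 * C6) i j = (-1) ^ ((i : ℕ) + 1) * C6 i.rev j := by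
        simp only [mul_apply, C6_apply i, ite_mul, zero_mul, Finset.sum_ite_eq', Finset.mem_univ,
          if_true]
    _ = if i = j then -1 else 0 := by
        rw [C6_apply, Fin.rev_rev, mul_ite, hsign, mul_zero]
        simp only [eq_comm]
    _ = (-1 : Matrix (Fin 6) (Fin 6) ℂ) i j := by
        rw [Matrix.neg_apply, one_apply, neg_ite, neg_zero]

theorem isUnit_det_C6 : IsUnit C6.det :=
  isUnit_det_of_right_inverse (B := -C6) (by rw [mul_neg, C6_mul_self, neg_neg])

theorem rank_A_eq_rank_B (A B : Matrix (Fin 6) (Fin 6) ℂ) (r : ℕ)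
    (hrank : (Matrix.of fun i => Sum.elim (A i) (B i) :
        Matrix (Fin 6) (Fin 6 ⊕ Fin 6) ℂ).rank = 6)
    (hsa : A * C6 * Aᴴ = B * C6 * Bᴴ)
    (hr : r ≤ 3) (hA : A.rank = 3 + r) :
    B.rank = 3 + r :=
  (rank_A_eq_rank_B_general isUnit_det_C6 isUnit_det_C6 hrank.ge hsa).symm.trans hA
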